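/- (Closure operation Cl(T−) on quiver data for two-component links, UP case.) Let m, n ∈ ℕ, let S⁺, A⁺ ∈ ℤ^m and S⁻, A⁻ ∈ ℤ^n, and let Q be a symmetric (m+n)×(m+n) integer matrix with blocks Q₊₊ (m×m), Q₊₋ (m×n), Q₋₊ = Q₊₋ᵀ, Q₋₋ (n×n). Write S = (S⁺,S⁻), A = (A⁺,A⁻) ∈ ℤ^{m+n}. Then for every j ∈ ℕ the following identity holds in ℚ(q,a), where for d ∈ ℕ^{m+n} we set k = d₁+⋯+d_m: Σ_{d ∈ ℕ^{m+n}, d₁+⋯+d_{m+n}=j} (−q)^{S·d + k} · a^{A·d} · q^{d·Q·dᵀ + 2k²} · [k; d₁,…,d_m] · [j−k; d_{m+1},…,d_{m+n}] · [j;k]₊ · (a²q^{2−2j−2k};q²)_k / (q²;q²)_k = Σ_{e ∈ ℕ^{2m+2n}, e₁+⋯+e_{2m+2n}=j} (−q)^{S′·e} · a^{A′·e} · q^{e·Q′·eᵀ} / ∏_{i=1}^{2m+2n}(q²;q²)_{e_i}, where S′ = (S⁺+2, S⁺+1, S⁻+1, S⁻) ∈ ℤ^{2m+2n}, A′ = (A⁺+2,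 A⁺, A⁻, A⁻) ∈ ℤ^{2m+2n}, and Q′ is the symmetric (2m+2n)×(2m+2n) matrix whose 4×4 block decomposition (block sizes m, m, n, n) has rows [Q₊₊−1, Q₊₊+U, Q₊₋, Q₊₋−1], [Q₊₊+L, Q₊₊+2, Q₊₋+1, Q₊₋], [Q₋₊, Q₋₊+1, Q₋₋+1, Q₋₋+L], [Q₋₊−1, Q₋₊, Q₋₋+U, Q₋₋]. -/

import Mathlib

/-!
The identity holds separately for each `d`: writing `d₊ = e₁ + e₂` and `d₋ = e₃ + e₄`, the `d`-th
summand on the left is the sum of the summands on the right over all such splittings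
`e = (e₁, e₂, e₃, e₄)`.

Put `k = |d₊|` and `N = j - k = |d₋|`. After cancellation the factors involving Pochhammer symbols
are `(a²q^{2-2j-2k};q²)_k / ∏ (q²;q²)_{d₊}` and `(q^{2k+2};q²)_N / ∏ (q²;q²)_{d₋}`, because
`(q²;q²)_j = (q²;q²)_k (q^{2k+2};q²)_N`. Each of them is expanded by a multi-index version of the
`q`-binomial theorem (`poch_multi`): cut `(x;q²)_{|d|}` into consecutive blocks of lengths `d_i`
and apply the `q`-binomial theorem (`poch_div_qq2`) to each block. Taking the blocks in increasing
or in decreasing order produces the cross terms `∑_{j<i} e_i f_j` or `∑_{i<j} e_i f_j`, which are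
the matrices `L` and `U` in `Q′`. What remains is to compare exponents: `quad_QclL` expresses the
quadratic form of `Q′` through that of `Q`, these cross terms and the total degrees of the four
blocks of `e`.
-/

/-!
STATEMENT 4: The closure operation Cl(T−) on quiver data for two-component links,
UP case (Lemma of Stošić–Wedrich, link case).

Setup: `F = ℚ(q,a)` with `qv = q`, `av = a`.
`poch c N = (c;q²)_N`, `qq2 N = (q²;q²)_N`.
Quantum multinomials appear inline as quotients of `qq2`'s.
The index set `ℕ^{m+n}` is modeled as `Fin m ⊕ Fin n → ℕ`, and `S = (S⁺,S⁻)` as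
`Sum.elim Sp Sm`.  `QclL Q` is the 4×4-block matrix (block sizes m, m, n, n) with rows
`[Q₊₊−1, Q₊₊+U, Q₊₋, Q₊₋−1]`, `[Q₊₊+L, Q₊₊+2, Q₊₋+1, Q₊₋]`,
`[Q₋₊, Q₋₊+1, Q₋₋+1, Q₋₋+L]`, `[Q₋₊−1, Q₋₊, Q₋₋+U, Q₋₋]`, where `L` is the strictly
lower-triangular all-ones matrix (entry `(i,j)` equal to 1 iff `j < i`) and `U = Lᵀ`.
-/

open Finset

noncomputable section

/-- The field `ℚ(q,a)` of rational functions in two indeterminates over `ℚ`. -/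
abbrev F : Type := FractionRing (MvPolynomial (Fin 2) ℚ)

/-- The indeterminate `q`. -/
def qv : F := algebraMap (MvPolynomial (Fin 2) ℚ) F (MvPolynomial.X 0)

/-- The indeterminate `a`. -/
def av : F := algebraMap (MvPolynomial (Fin 2) ℚ) F (MvPolynomial.X 1)

/-- The Pochhammer symbol `(c;q²)_N = ∏_{i=0}^{N-1} (1 - c q^{2i})`. -/
def poch (c : F) (N : ℕ) : F := ∏ i ∈ Finset.range N, (1 - c * qv ^ (2 * i))

/-- `(q²;q²)_N = ∏_{i=1}^{N} (1 - q^{2i})`. -/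
def qq2 (N : ℕ) : F := poch (qv ^ 2) N

/-- The finset of `ι`-tuples of naturals with total sum `N`. -/
def tuples (ι : Type) [Fintype ι] [DecidableEq ι] (N : ℕ) : Finset (ι → ℕ) :=
  (Fintype.piFinset fun _ : ι => Finset.range (N + 1)).filter fun d => ∑ x, d x = N

/-- The matrix `Q′` of the link UP closure: block rows
`[Q₊₊−1, Q₊₊+U, Q₊₋, Q₊₋−1]`, `[Q₊₊+L, Q₊₊+2, Q₊₋+1, Q₊₋]`,
`[Q₋₊, Q₋₊+1, Q₋₋+1, Q₋₋+L]`, `[Q₋₊−1, Q₋₊, Q₋₋+U, Q₋₋]`. -/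
def QclL {m n : ℕ} (Q : Matrix (Fin m ⊕ Fin n) (Fin m ⊕ Fin n) ℤ) :
    Matrix (Fin m ⊕ Fin m ⊕ Fin n ⊕ Fin n) (Fin m ⊕ Fin m ⊕ Fin n ⊕ Fin n) ℤ :=
  Matrix.of fun x y =>
    match x, y with
    | Sum.inl i, Sum.inl j => Q (Sum.inl i) (Sum.inl j) - 1
    | Sum.inl i, Sum.inr (Sum.inl j) => Q (Sum.inl i) (Sum.inl j) + (if i < j then 1 else 0)
    | Sum.inl i, Sum.inr (Sum.inr (Sum.inl j)) => Q (Sum.inl i) (Sum.inr j)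
    | Sum.inl i, Sum.inr (Sum.inr (Sum.inr j)) => Q (Sum.inl i) (Sum.inr j) - 1
    | Sum.inr (Sum.inl i), Sum.inl j => Q (Sum.inl i) (Sum.inl j) + (if j < i then 1 else 0)
    | Sum.inr (Sum.inl i), Sum.inr (Sum.inl j) => Q (Sum.inl i) (Sum.inl j) + 2
    | Sum.inr (Sum.inl i), Sum.inr (Sum.inr (Sum.inl j)) => Q (Sum.inl i) (Sum.inr j) + 1
    | Sum.inr (Sum.inl i), Sum.inr (Sum.inr (Sum.inr j)) => Q (Sum.inl i) (Sum.inr j)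
    | Sum.inr (Sum.inr (Sum.inl i)), Sum.inl j => Q (Sum.inr i) (Sum.inl j)
    | Sum.inr (Sum.inr (Sum.inl i)), Sum.inr (Sum.inl j) => Q (Sum.inr i) (Sum.inl j) + 1
    | Sum.inr (Sum.inr (Sum.inl i)), Sum.inr (Sum.inr (Sum.inl j)) =>
        Q (Sum.inr i) (Sum.inr j) + 1
    | Sum.inr (Sum.inr (Sum.inl i)), Sum.inr (Sum.inr (Sum.inr j)) =>
        Q (Sum.inr i) (Sum.inr j) + (if j < i then 1 else 0)
    | Sum.inr (Sum.inr (Sum.inr i)), Sum.inl j => Q (Sum.inr i) (Sum.inl j) - 1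
    | Sum.inr (Sum.inr (Sum.inr i)), Sum.inr (Sum.inl j) => Q (Sum.inr i) (Sum.inl j)
    | Sum.inr (Sum.inr (Sum.inr i)), Sum.inr (Sum.inr (Sum.inl j)) =>
        Q (Sum.inr i) (Sum.inr j) + (if i < j then 1 else 0)
    | Sum.inr (Sum.inr (Sum.inr i)), Sum.inr (Sum.inr (Sum.inr j)) => Q (Sum.inr i) (Sum.inr j)

/-! ### Pochhammer symbols -/

lemma qv_ne_zero : qv ≠ 0 := by
  unfold qv
  rw [Ne, IsFractionRing.to_map_eq_zero_iff]
  exact MvPolynomial.X_ne_zero 0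

lemma av_ne_zero : av ≠ 0 := by
  unfold av
  rw [Ne, IsFractionRing.to_map_eq_zero_iff]
  exact MvPolynomial.X_ne_zero 1

lemma one_sub_qv_pow_ne_zero (N : ℕ) : 1 - qv ^ (2 * (N + 1)) ≠ 0 := by
  have h : (1 : F) - qv ^ (2 * (N + 1)) = algebraMap (MvPolynomial (Fin 2) ℚ) F
      (1 - MvPolynomial.X 0 ^ (2 * (N + 1))) := by
    simp [qv]
  rw [h, Ne, IsFractionRing.to_map_eq_zero_iff]
  intro h0
  have h1 := congrArg (MvPolynomial.eval (fun _ => (0 : ℚ))) h0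
  simp at h1

lemma qq2_succ (N : ℕ) : qq2 (N + 1) = qq2 N * (1 - qv ^ (2 * (N + 1))) := by
  unfold qq2 poch
  rw [Finset.prod_range_succ]
  congr 2
  ring

lemma qq2_zero : qq2 0 = 1 := by simp [qq2, poch]

lemma qq2_ne_zero (N : ℕ) : qq2 N ≠ 0 := by
  induction N with
  | zero => simp [qq2_zero]
  | succ N ih => rw [qq2_succ]; exact mul_ne_zero ih (one_sub_qv_pow_ne_zero N)

lemma poch_add (c : F) (M N : ℕ) : poch c (M + N) = poch c M * poch (c * qv ^ (2 * M)) N := by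
  unfold poch
  rw [Finset.prod_range_add]
  congr 1
  refine Finset.prod_congr rfl fun i _ => ?_
  ring

/-- The summand of the `q`-binomial theorem without its denominator. -/
def qbinNum (x : F) (e : ℕ) : F := (-x) ^ e * qv ^ ((e : ℤ) * ((e : ℤ) - 1))

lemma qbinNum_succ (x : F) (e : ℕ) : qbinNum x (e + 1) = -x * qv ^ (2 * e) * qbinNum x e := by
  unfold qbinNum
  have h : ((e + 1 : ℕ) : ℤ) * (((e + 1 : ℕ) : ℤ) - 1) = ((2 * e : ℕ) : ℤ) + (e : ℤ) * ((e : ℤ) - 1) := by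
    push_cast; ring
  rw [h, zpow_add₀ qv_ne_zero, zpow_natCast]
  ring

/-- The `q`-binomial theorem, divided by `(q²;q²)_N`. The induction step splits
`1 - q^{2(e+f)} = (1 - q^{2f}) + q^{2f} (1 - q^{2e})`. -/
lemma poch_div_qq2 (x : F) (N : ℕ) :
    poch x N / qq2 N = ∑ p ∈ antidiagonal N, qbinNum x p.1 / (qq2 p.1 * qq2 p.2) := by
  induction N with
  | zero => simp [poch, qbinNum, qq2_zero]
  | succ N ih =>
    have hN := one_sub_qv_pow_ne_zero N
    have hstep : poch x (N + 1) / qq2 (N + 1) =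
        (1 - x * qv ^ (2 * N)) * (poch x N / qq2 N) / (1 - qv ^ (2 * (N + 1))) := by
      rw [qq2_succ]
      have : poch x (N + 1) = poch x N * (1 - x * qv ^ (2 * N)) := by
        unfold poch; rw [Finset.prod_range_succ]
      rw [this]
      have := qq2_ne_zero N
      field_simp
    rw [hstep, ih, div_eq_iff hN]
    have hsplit : (∑ p ∈ antidiagonal (N + 1), qbinNum x p.1 / (qq2 p.1 * qq2 p.2)) *
          (1 - qv ^ (2 * (N + 1))) =
        (∑ p ∈ antidiagonal (N + 1),
          qbinNum x p.1 / (qq2 p.1 * qq2 p.2) * (1 - qv ^ (2 * p.2))) +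
        ∑ p ∈ antidiagonal (N + 1),
          qbinNum x p.1 / (qq2 p.1 * qq2 p.2) * (qv ^ (2 * p.2) * (1 - qv ^ (2 * p.1))) := by
      rw [Finset.sum_mul, ← Finset.sum_add_distrib]
      refine Finset.sum_congr rfl fun p hp => ?_
      rw [← mem_antidiagonal.1 hp]
      ring
    rw [hsplit, Finset.Nat.sum_antidiagonal_succ', Finset.Nat.sum_antidiagonal_succ]
    simp only [mul_zero, pow_zero, sub_self, zero_add]
    rw [sub_mul, one_mul, sub_eq_add_neg, Finset.mul_sum, ← Finset.sum_neg_distrib]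
    congr 1
    · refine Finset.sum_congr rfl fun p _ => ?_
      have h1 := qq2_ne_zero p.1
      have h2 := qq2_ne_zero p.2
      have h3 := one_sub_qv_pow_ne_zero p.2
      rw [qq2_succ]
      field_simp
    · refine Finset.sum_congr rfl fun p hp => ?_
      have h1 := qq2_ne_zero p.1
      have h2 := qq2_ne_zero p.2
      have h3 := one_sub_qv_pow_ne_zero p.1
      rw [qq2_succ, qbinNum_succ, ← mem_antidiagonal.1 hp]
      field_simp
      ring

/-! ### The multi-index `q`-binomial theorem -/

/-- `(x;q²)_{|d|}` cut into consecutive blocks of lengths `d_i`. -/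
lemma poch_sum {ι : Type} [LinearOrder ι] (x : F) (d : ι → ℕ) (s : Finset ι) :
    poch x (∑ i ∈ s, d i) =
      ∏ i ∈ s, poch (x * qv ^ (2 * ∑ j ∈ s with j < i, d j)) (d i) := by
  induction s using Finset.induction_on_max with
  | empty => simp [poch]
  | insert a s hs ih =>
    have ha : a ∉ s := fun h => lt_irrefl _ (hs a h)
    rw [Finset.sum_insert ha, Finset.prod_insert ha, add_comm, poch_add, ih, mul_comm]
    congr 1
    · have : (insert a s).filter (fun j => j < a) = s := by
        ext b
        simp only [mem_filter, mem_insert]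
        constructor
        · rintro ⟨rfl | hb, hlt⟩
          · exact absurd hlt (lt_irrefl _)
          · exact hb
        · exact fun hb => ⟨Or.inr hb, hs b hb⟩
      rw [this]
    · refine Finset.prod_congr rfl fun i hi => ?_
      have : (insert a s).filter (fun j => j < i) = s.filter (fun j => j < i) := by
        rw [Finset.filter_insert, if_neg (not_lt.2 (hs i hi).le)]
      rw [this]

/-- The cross term `∑_{j<i} u_i v_j`. -/
def cross {ι : Type} [Fintype ι] [LinearOrder ι] (u v : ι → ℕ) : ℤ :=
  ∑ i, ∑ j, if j < i then (u i : ℤ) * (v j : ℤ) else 0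

lemma sq_sum_eq_cross {ι : Type} [Fintype ι] [LinearOrder ι] (u : ι → ℕ) :
    (∑ i, (u i : ℤ)) ^ 2 = (∑ i, (u i : ℤ) ^ 2) + 2 * cross u u := by
  have h1 : (∑ i, (u i : ℤ)) ^ 2 = (∑ i, ∑ j, if j = i then (u i : ℤ) * (u j : ℤ) else 0) +
      cross u u + ∑ i, ∑ j, if i < j then (u i : ℤ) * (u j : ℤ) else 0 := by
    rw [sq, Finset.sum_mul_sum, cross, ← Finset.sum_add_distrib, ← Finset.sum_add_distrib]
    refine Finset.sum_congr rfl fun i _ => ?_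
    rw [← Finset.sum_add_distrib, ← Finset.sum_add_distrib]
    refine Finset.sum_congr rfl fun j _ => ?_
    rcases lt_trichotomy i j with h | h | h
    · simp [h, h.ne', h.not_gt]
    · simp [h]
    · simp [h, h.ne, h.not_gt]
  have h2 : (∑ i, ∑ j, if i < j then (u i : ℤ) * (u j : ℤ) else 0) = cross u u := by
    rw [Finset.sum_comm, cross]
    refine Finset.sum_congr rfl fun i _ => Finset.sum_congr rfl fun j _ => ?_
    rw [mul_comm]
  rw [h1, h2]
  simp only [Finset.sum_ite_eq', Finset.mem_univ, if_true]
  simp only [sq]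
  ring

lemma zpow_sum_qv {ι : Type} (s : Finset ι) (f : ι → ℤ) :
    ∏ i ∈ s, qv ^ f i = qv ^ ∑ i ∈ s, f i := by
  classical
  induction s using Finset.induction_on with
  | empty => simp
  | insert a s ha ih => rw [Finset.prod_insert ha, Finset.sum_insert ha, ih, zpow_add₀ qv_ne_zero]

/-- The multi-index `q`-binomial theorem: the blocks of `(x;q²)_{|d|}`, taken in the order of `ι`,
are expanded separately, a pair `p i = (e_i, f_i)` splitting `d i`. -/
lemma poch_multi {ι : Type} [Fintype ι] [LinearOrder ι] (x : F) (d : ι → ℕ) :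
    poch x (∑ i, d i) / ∏ i, qq2 (d i) =
      ∑ p ∈ Fintype.piFinset (fun i => antidiagonal (d i)),
        (-x) ^ (∑ i, (p i).1) *
          qv ^ ((∑ i, ((p i).1 : ℤ)) ^ 2 - (∑ i, ((p i).1 : ℤ)) +
            2 * cross (fun i => (p i).1) (fun i => (p i).2)) /
          ((∏ i, qq2 (p i).1) * ∏ i, qq2 (p i).2) := by
  rw [poch_sum, ← Finset.prod_div_distrib]
  simp only [poch_div_qq2]
  rw [Finset.prod_univ_sum]
  refine Finset.sum_congr rfl fun p hp => ?_
  have hd : ∀ i, (d i : ℤ) = (p i).1 + (p i).2 := fun i => by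
    rw [← mem_antidiagonal.1 (Fintype.mem_piFinset.1 hp i)]; push_cast; rfl
  rw [Finset.prod_div_distrib, Finset.prod_mul_distrib]
  congr 1
  have hterm : ∀ i, qbinNum (x * qv ^ (2 * ∑ j with j < i, d j)) (p i).1 =
      (-x) ^ (p i).1 * qv ^ (((p i).1 : ℤ) * (((p i).1 : ℤ) - 1) +
        2 * ∑ j, if j < i then ((p i).1 : ℤ) * (d j : ℤ) else 0) := fun i => by
    unfold qbinNum
    rw [← neg_mul, mul_pow, ← pow_mul, ← zpow_natCast qv, mul_assoc, ← zpow_add₀ qv_ne_zero]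
    congr 2
    rw [← Finset.sum_filter, ← Finset.mul_sum]
    push_cast
    ring
  simp only [hterm]
  rw [Finset.prod_mul_distrib, Finset.prod_pow_eq_pow_sum, zpow_sum_qv]
  congr 2
  rw [sq_sum_eq_cross]
  have hc : (∑ i, ∑ j, if j < i then ((p i).1 : ℤ) * (d j : ℤ) else 0) =
      cross (fun i => (p i).1) (fun i => (p i).1) +
        cross (fun i => (p i).1) (fun i => (p i).2) := by
    simp only [cross, ← Finset.sum_add_distrib]
    refine Finset.sum_congr rfl fun i _ => Finset.sum_congr rfl fun j _ => ?_
    split_ifs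
    · rw [hd]; ring
    · simp
  rw [Finset.sum_add_distrib, ← Finset.mul_sum, hc]
  have : (∑ i, ((p i).1 : ℤ) * (((p i).1 : ℤ) - 1)) =
      (∑ i, ((p i).1 : ℤ) ^ 2) - ∑ i, ((p i).1 : ℤ) := by
    rw [← Finset.sum_sub_distrib]
    exact Finset.sum_congr rfl fun i _ => by ring
  rw [this]
  ring

/-- The multi-index `q`-binomial theorem with the blocks taken in decreasing order. -/
lemma poch_multi_dual {ι : Type} [Fintype ι] [LinearOrder ι] (x : F) (d : ι → ℕ) :
    poch x (∑ i, d i) / ∏ i, qq2 (d i) =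
      ∑ p ∈ Fintype.piFinset (fun i => antidiagonal (d i)),
        (-x) ^ (∑ i, (p i).1) *
          qv ^ ((∑ i, ((p i).1 : ℤ)) ^ 2 - (∑ i, ((p i).1 : ℤ)) +
            2 * cross (fun i => (p i).2) (fun i => (p i).1)) /
          ((∏ i, qq2 (p i).1) * ∏ i, qq2 (p i).2) := by
  have hcross : ∀ u v : ι → ℕ, cross (ι := ιᵒᵈ) u v = cross v u := fun u v => by
    unfold cross
    rw [Finset.sum_comm]
    refine Finset.sum_congr rfl fun i _ => Finset.sum_congr rfl fun j _ => ?_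
    rw [mul_comm]
    rfl
  refine (poch_multi (ι := ιᵒᵈ) x d).trans ?_
  refine Finset.sum_congr rfl fun p _ => ?_
  exact congrArg (fun c => (-x) ^ (∑ i, (p i).1) *
          qv ^ ((∑ i, ((p i).1 : ℤ)) ^ 2 - (∑ i, ((p i).1 : ℤ)) + 2 * c) /
          ((∏ i, qq2 (p i).1) * ∏ i, qq2 (p i).2)) (hcross (fun i => (p i).1) (fun i => (p i).2))

/-! ### The quadratic form of the closure matrix -/

/-- The bilinear form `u M vᵀ`. -/
def bil {ι κ : Type} [Fintype ι] [Fintype κ] (M : ι → κ → ℤ) (u : ι → ℕ) (v : κ → ℕ) : ℤ :=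
  ∑ i, ∑ j, (u i : ℤ) * M i j * (v j : ℤ)

lemma bil_add_const {ι κ : Type} [Fintype ι] [Fintype κ] (M : ι → κ → ℤ) (c : ℤ)
    (u : ι → ℕ) (v : κ → ℕ) :
    bil (fun i j => M i j + c) u v = bil M u v + c * ((∑ i, (u i : ℤ)) * ∑ j, (v j : ℤ)) := by
  unfold bil
  rw [Finset.sum_mul_sum, Finset.mul_sum, ← Finset.sum_add_distrib]
  refine Finset.sum_congr rfl fun i _ => ?_
  rw [Finset.mul_sum, ← Finset.sum_add_distrib]
  exact Finset.sum_congr rfl fun j _ => by ring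

lemma bil_add_lower {ι : Type} [Fintype ι] [LinearOrder ι] (M : ι → ι → ℤ) (u v : ι → ℕ) :
    bil (fun i j => M i j + if j < i then 1 else 0) u v = bil M u v + cross u v := by
  unfold bil cross
  rw [← Finset.sum_add_distrib]
  refine Finset.sum_congr rfl fun i _ => ?_
  rw [← Finset.sum_add_distrib]
  refine Finset.sum_congr rfl fun j _ => ?_
  dsimp only
  split_ifs <;> ring

lemma bil_add_upper {ι : Type} [Fintype ι] [LinearOrder ι] (M : ι → ι → ℤ) (u v : ι → ℕ) :
    bil (fun i j => M i j + if i < j then 1 else 0) u v = bil M u v + cross v u := by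
  unfold bil cross
  rw [Finset.sum_comm (f := fun i j => if j < i then (v i : ℤ) * (u j : ℤ) else 0),
    ← Finset.sum_add_distrib]
  refine Finset.sum_congr rfl fun i _ => ?_
  rw [← Finset.sum_add_distrib]
  refine Finset.sum_congr rfl fun j _ => ?_
  dsimp only
  split_ifs <;> ring

lemma bil_add_add {ι κ : Type} [Fintype ι] [Fintype κ] (M : ι → κ → ℤ)
    (u w : ι → ℕ) (v z : κ → ℕ) :
    bil M (fun i => u i + w i) (fun j => v j + z j) =
      bil M u v + bil M u z + bil M w v + bil M w z := by
  unfold bil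
  simp only [← Finset.sum_add_distrib]
  refine Finset.sum_congr rfl fun i _ => Finset.sum_congr rfl fun j _ => ?_
  push_cast
  ring

/-- The concatenated multi-index `(e₁, e₂, e₃, e₄)`. -/
def cat4 {m n : ℕ} (e₁ e₂ : Fin m → ℕ) (e₃ e₄ : Fin n → ℕ) :
    Fin m ⊕ Fin m ⊕ Fin n ⊕ Fin n → ℕ :=
  Sum.elim e₁ (Sum.elim e₂ (Sum.elim e₃ e₄))

/-- The quadratic form of `Q′` at `e` in terms of that of `Q` at `d = (e₁ + e₂, e₃ + e₄)`. The blocks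
`+U` and `+L` contribute only cross terms, the constant blocks only products of total degrees. -/
lemma quad_QclL {m n : ℕ} (Q : Matrix (Fin m ⊕ Fin n) (Fin m ⊕ Fin n) ℤ)
    (e₁ e₂ : Fin m → ℕ) (e₃ e₄ : Fin n → ℕ) (d : Fin m ⊕ Fin n → ℕ)
    (h₁ : ∀ i, d (Sum.inl i) = e₁ i + e₂ i) (h₂ : ∀ i, d (Sum.inr i) = e₃ i + e₄ i)
    (α β γ δ : ℤ) (hα : ∑ i, (e₁ i : ℤ) = α) (hβ : ∑ i, (e₂ i : ℤ) = β)
    (hγ : ∑ i, (e₃ i : ℤ) = γ) (hδ : ∑ i, (e₄ i : ℤ) = δ) :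
    (∑ x, ∑ y, (cat4 e₁ e₂ e₃ e₄ x : ℤ) * QclL Q x y * (cat4 e₁ e₂ e₃ e₄ y : ℤ)) =
      (∑ x, ∑ y, (d x : ℤ) * Q x y * (d y : ℤ)) - α ^ 2 + 2 * β ^ 2 + γ ^ 2 - 2 * α * δ +
        2 * β * γ + 2 * cross e₂ e₁ + 2 * cross e₃ e₄ := by
  have hd : (∑ x, ∑ y, (d x : ℤ) * Q x y * (d y : ℤ)) =
      bil (fun i j => Q (Sum.inl i) (Sum.inl j)) (fun i => e₁ i + e₂ i) (fun i => e₁ i + e₂ i) +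
      bil (fun i j => Q (Sum.inl i) (Sum.inr j)) (fun i => e₁ i + e₂ i) (fun i => e₃ i + e₄ i) +
      (bil (fun i j => Q (Sum.inr i) (Sum.inl j)) (fun i => e₃ i + e₄ i) (fun i => e₁ i + e₂ i) +
      bil (fun i j => Q (Sum.inr i) (Sum.inr j)) (fun i => e₃ i + e₄ i) (fun i => e₃ i + e₄ i)) := by
    simp only [Fintype.sum_sum_type, h₁, h₂, Finset.sum_add_distrib, bil]
    ring
  have he : (∑ x, ∑ y, (cat4 e₁ e₂ e₃ e₄ x : ℤ) * QclL Q x y * (cat4 e₁ e₂ e₃ e₄ y : ℤ)) =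
      (bil (fun i j => Q (Sum.inl i) (Sum.inl j) + (-1)) e₁ e₁ +
        (bil (fun i j => Q (Sum.inl i) (Sum.inl j) + if i < j then 1 else 0) e₁ e₂ +
        (bil (fun i j => Q (Sum.inl i) (Sum.inr j)) e₁ e₃ +
        bil (fun i j => Q (Sum.inl i) (Sum.inr j) + (-1)) e₁ e₄))) +
      ((bil (fun i j => Q (Sum.inl i) (Sum.inl j) + if j < i then 1 else 0) e₂ e₁ +
        (bil (fun i j => Q (Sum.inl i) (Sum.inl j) + 2) e₂ e₂ +
        (bil (fun i j => Q (Sum.inl i) (Sum.inr j) + 1) e₂ e₃ +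
        bil (fun i j => Q (Sum.inl i) (Sum.inr j)) e₂ e₄))) +
      ((bil (fun i j => Q (Sum.inr i) (Sum.inl j)) e₃ e₁ +
        (bil (fun i j => Q (Sum.inr i) (Sum.inl j) + 1) e₃ e₂ +
        (bil (fun i j => Q (Sum.inr i) (Sum.inr j) + 1) e₃ e₃ +
        bil (fun i j => Q (Sum.inr i) (Sum.inr j) + if j < i then 1 else 0) e₃ e₄))) +
      (bil (fun i j => Q (Sum.inr i) (Sum.inl j) + (-1)) e₄ e₁ +
        (bil (fun i j => Q (Sum.inr i) (Sum.inl j)) e₄ e₂ +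
        (bil (fun i j => Q (Sum.inr i) (Sum.inr j) + if i < j then 1 else 0) e₄ e₃ +
        bil (fun i j => Q (Sum.inr i) (Sum.inr j)) e₄ e₄))))) := by
    simp only [Fintype.sum_sum_type, Finset.sum_add_distrib, bil, cat4, QclL, Matrix.of_apply,
      Sum.elim_inl, Sum.elim_inr, sub_eq_add_neg]
    ring
  rw [hd, he]
  simp only [bil_add_add, bil_add_const, bil_add_lower, bil_add_upper, hα, hβ, hγ, hδ]
  ring

/-! ### Splitting a summand -/

lemma mem_tuples {ι : Type} [Fintype ι] [DecidableEq ι] {N : ℕ} {d : ι → ℕ} :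
    d ∈ tuples ι N ↔ ∑ x, d x = N := by
  unfold tuples
  simp only [mem_filter, Fintype.mem_piFinset, mem_range, and_iff_right_iff_imp]
  rintro h x
  have := Finset.single_le_sum (f := d) (fun i _ => Nat.zero_le _) (Finset.mem_univ x)
  omega

/-- The summand of the right-hand side at `e`. -/
def rhsTerm {m n : ℕ} (Q : Matrix (Fin m ⊕ Fin n) (Fin m ⊕ Fin n) ℤ)
    (Sp Ap : Fin m → ℤ) (Sm Am : Fin n → ℤ) (e : Fin m ⊕ Fin m ⊕ Fin n ⊕ Fin n → ℕ) : F :=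
  (-qv) ^
      (∑ x, Sum.elim (fun i => Sp i + 2)
        (Sum.elim (fun i => Sp i + 1) (Sum.elim (fun i => Sm i + 1) Sm)) x * (e x : ℤ)) *
    av ^
      (∑ x, Sum.elim (fun i => Ap i + 2)
        (Sum.elim Ap (Sum.elim Am Am)) x * (e x : ℤ)) *
    qv ^ (∑ x, ∑ y, (e x : ℤ) * QclL Q x y * (e y : ℤ)) /
    ∏ x, qq2 (e x)

/-- The comparison of exponents. The signs agree because each minus sign is kept together with
one factor `q`. -/
lemma term_eq {m n : ℕ} (Q : Matrix (Fin m ⊕ Fin n) (Fin m ⊕ Fin n) ℤ)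
    (Sp Ap : Fin m → ℤ) (Sm Am : Fin n → ℤ) (k N : ℕ) (d : Fin m ⊕ Fin n → ℕ)
    (hk : ∑ i, d (Sum.inl i) = k) (hN : ∑ i, d (Sum.inr i) = N)
    (e₁ e₂ : Fin m → ℕ) (e₃ e₄ : Fin n → ℕ)
    (h₁ : ∀ i, d (Sum.inl i) = e₁ i + e₂ i) (h₂ : ∀ i, d (Sum.inr i) = e₃ i + e₄ i) :
    (-qv) ^ ((∑ x, Sum.elim Sp Sm x * (d x : ℤ)) + (k : ℤ)) *
        av ^ (∑ x, Sum.elim Ap Am x * (d x : ℤ)) *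
        qv ^ ((∑ x, ∑ y, (d x : ℤ) * Q x y * (d y : ℤ)) + 2 * (k : ℤ) ^ 2) *
      (((-(av ^ 2 * qv ^ ((2 : ℤ) - 2 * ((k + N : ℕ) : ℤ) - 2 * (k : ℤ)))) ^ (∑ i, e₁ i) *
          qv ^ ((∑ i, (e₁ i : ℤ)) ^ 2 - (∑ i, (e₁ i : ℤ)) + 2 * cross e₂ e₁) /
          ((∏ i, qq2 (e₁ i)) * ∏ i, qq2 (e₂ i))) *
        ((-(qv ^ 2 * qv ^ (2 * k))) ^ (∑ i, e₃ i) *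
          qv ^ ((∑ i, (e₃ i : ℤ)) ^ 2 - (∑ i, (e₃ i : ℤ)) + 2 * cross e₃ e₄) /
          ((∏ i, qq2 (e₃ i)) * ∏ i, qq2 (e₄ i)))) =
      rhsTerm Q Sp Ap Sm Am (cat4 e₁ e₂ e₃ e₄) := by
  have hq := qv_ne_zero
  have hnq : -qv ≠ 0 := neg_ne_zero.2 hq
  have ha := av_ne_zero
  have hα : ∑ i, (e₁ i : ℤ) = ((∑ i, e₁ i : ℕ) : ℤ) := by push_cast; rfl
  have hβ : ∑ i, (e₂ i : ℤ) = ((∑ i, e₂ i : ℕ) : ℤ) := by push_cast; rfl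
  have hγ : ∑ i, (e₃ i : ℤ) = ((∑ i, e₃ i : ℕ) : ℤ) := by push_cast; rfl
  have hδ : ∑ i, (e₄ i : ℤ) = ((∑ i, e₄ i : ℕ) : ℤ) := by push_cast; rfl
  have hkz : (k : ℤ) = ((∑ i, e₁ i : ℕ) : ℤ) + ((∑ i, e₂ i : ℕ) : ℤ) := by
    rw [← hk, ← Nat.cast_add, ← Finset.sum_add_distrib]; simp only [h₁]
  have hNz : (N : ℤ) = ((∑ i, e₃ i : ℕ) : ℤ) + ((∑ i, e₄ i : ℕ) : ℤ) := by
    rw [← hN, ← Nat.cast_add, ← Finset.sum_add_distrib]; simp only [h₂]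
  unfold rhsTerm
  rw [quad_QclL Q e₁ e₂ e₃ e₄ d h₁ h₂ _ _ _ _ hα hβ hγ hδ, hα, hγ]
  have hS : (∑ x, Sum.elim (fun i => Sp i + 2)
        (Sum.elim (fun i => Sp i + 1) (Sum.elim (fun i => Sm i + 1) Sm)) x *
          (cat4 e₁ e₂ e₃ e₄ x : ℤ)) =
      ((∑ x, Sum.elim Sp Sm x * (d x : ℤ)) + (k : ℤ)) +
        ((∑ i, e₁ i : ℕ) : ℤ) + ((∑ i, e₃ i : ℕ) : ℤ) := by
    rw [hkz, ← hα, ← hβ, ← hγ]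
    simp only [Fintype.sum_sum_type, cat4, Sum.elim_inl, Sum.elim_inr, h₁, h₂, Nat.cast_add,
      mul_add, add_mul, Finset.sum_add_distrib, one_mul, ← Finset.mul_sum]
    ring
  have hA : (∑ x, Sum.elim (fun i => Ap i + 2) (Sum.elim Ap (Sum.elim Am Am)) x *
          (cat4 e₁ e₂ e₃ e₄ x : ℤ)) =
      (∑ x, Sum.elim Ap Am x * (d x : ℤ)) + 2 * ((∑ i, e₁ i : ℕ) : ℤ) := by
    rw [← hα]
    simp only [Fintype.sum_sum_type, cat4, Sum.elim_inl, Sum.elim_inr, h₁, h₂, Nat.cast_add,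
      mul_add, add_mul, Finset.sum_add_distrib, ← Finset.mul_sum]
    ring
  have hP : ∏ x, qq2 (cat4 e₁ e₂ e₃ e₄ x) =
      ((∏ i, qq2 (e₁ i)) * ∏ i, qq2 (e₂ i)) * ((∏ i, qq2 (e₃ i)) * ∏ i, qq2 (e₄ i)) := by
    simp only [Fintype.prod_sum_type, cat4, Sum.elim_inl, Sum.elim_inr]
    ring
  rw [hS, hA, hP]
  generalize ((∏ i, qq2 (e₁ i)) * ∏ i, qq2 (e₂ i)) = P₁
  generalize ((∏ i, qq2 (e₃ i)) * ∏ i, qq2 (e₄ i)) = P₂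
  generalize (∑ x, Sum.elim Sp Sm x * (d x : ℤ)) = s
  generalize (∑ x, Sum.elim Ap Am x * (d x : ℤ)) = t
  generalize (∑ x, ∑ y, (d x : ℤ) * Q x y * (d y : ℤ)) = w
  generalize (∑ i, e₁ i) = α at *
  generalize (∑ i, e₂ i) = β at *
  generalize (∑ i, e₃ i) = γ at *
  generalize (∑ i, e₄ i) = δ at *
  generalize cross e₂ e₁ = c₁
  generalize cross e₃ e₄ = c₂
  have hx : (-(av ^ 2 * qv ^ ((2 : ℤ) - 2 * ((k + N : ℕ) : ℤ) - 2 * (k : ℤ)))) ^ α =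
      (-qv) ^ (α : ℤ) * av ^ (2 * (α : ℤ)) *
        qv ^ (((1 : ℤ) - 2 * ((k : ℤ) + N) - 2 * (k : ℤ)) * α) := by
    have : (-(av ^ 2 * qv ^ ((2 : ℤ) - 2 * ((k + N : ℕ) : ℤ) - 2 * (k : ℤ)))) =
        (-qv) * av ^ (2 : ℤ) * qv ^ ((1 : ℤ) - 2 * ((k : ℤ) + N) - 2 * (k : ℤ)) := by
      have h : ((2 : ℤ) - 2 * ((k + N : ℕ) : ℤ) - 2 * (k : ℤ)) =
          1 + ((1 : ℤ) - 2 * ((k : ℤ) + N) - 2 * (k : ℤ)) := by push_cast; ring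
      rw [h, zpow_add₀ hq, zpow_one, zpow_ofNat]
      ring
    rw [this, ← zpow_natCast, mul_zpow, mul_zpow, ← zpow_mul, ← zpow_mul]
  have hy : (-(qv ^ 2 * qv ^ (2 * k))) ^ γ =
      (-qv) ^ (γ : ℤ) * qv ^ ((2 * (k : ℤ) + 1) * γ) := by
    have : (-(qv ^ 2 * qv ^ (2 * k))) = (-qv) * qv ^ (2 * (k : ℤ) + 1) := by
      have h : (2 * (k : ℤ) + 1) = ((2 * k + 1 : ℕ) : ℤ) := by push_cast; ring
      rw [h, zpow_natCast]
      ring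
    rw [this, ← zpow_natCast, mul_zpow, ← zpow_mul]
  have hE : w - (α : ℤ) ^ 2 + 2 * (β : ℤ) ^ 2 + (γ : ℤ) ^ 2 - 2 * (α : ℤ) * δ +
        2 * (β : ℤ) * γ + 2 * c₁ + 2 * c₂ =
      (w + 2 * (k : ℤ) ^ 2) + ((1 : ℤ) - 2 * ((k : ℤ) + N) - 2 * (k : ℤ)) * α +
        ((α : ℤ) ^ 2 - α + 2 * c₁) + (2 * (k : ℤ) + 1) * γ + ((γ : ℤ) ^ 2 - γ + 2 * c₂) := by
    rw [hNz, hkz]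
    ring
  rw [hx, hy, hE, zpow_add₀ hnq _ (γ : ℤ), zpow_add₀ hnq _ (α : ℤ), zpow_add₀ ha _ (2 * (α : ℤ)),
    zpow_add₀ hq _ ((γ : ℤ) ^ 2 - γ + 2 * c₂), zpow_add₀ hq _ ((2 * (k : ℤ) + 1) * γ),
    zpow_add₀ hq _ ((α : ℤ) ^ 2 - α + 2 * c₁), zpow_add₀ hq _ (_ * (α : ℤ))]
  rw [div_mul_div_comm, mul_div_assoc']
  congr 1
  ring

/-- The first coordinates of `p₁`, `p₂` give `e₁`, `e₃`, the second ones `e₂`, `e₄`. -/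
def splitIndex {m n : ℕ} (p₁ : Fin m → ℕ × ℕ) (p₂ : Fin n → ℕ × ℕ) :
    Fin m ⊕ Fin m ⊕ Fin n ⊕ Fin n → ℕ :=
  cat4 (fun i => (p₁ i).1) (fun i => (p₁ i).2) (fun i => (p₂ i).1) (fun i => (p₂ i).2)

/-- The summand of the left-hand side at `d` (with `j = k + N`) is the sum of the summands of the
right-hand side over all splittings of `d`. -/
lemma lhsTerm_eq {m n : ℕ} (Q : Matrix (Fin m ⊕ Fin n) (Fin m ⊕ Fin n) ℤ)
    (Sp Ap : Fin m → ℤ) (Sm Am : Fin n → ℤ) (k N : ℕ) (d : Fin m ⊕ Fin n → ℕ)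
    (hk : ∑ i, d (Sum.inl i) = k) (hN : ∑ i, d (Sum.inr i) = N) :
    (-qv) ^ ((∑ x, Sum.elim Sp Sm x * (d x : ℤ)) + (k : ℤ)) *
        av ^ (∑ x, Sum.elim Ap Am x * (d x : ℤ)) *
        qv ^ ((∑ x, ∑ y, (d x : ℤ) * Q x y * (d y : ℤ)) + 2 * (k : ℤ) ^ 2) *
        (qq2 k / ∏ i, qq2 (d (Sum.inl i))) *
        (qq2 N / ∏ i, qq2 (d (Sum.inr i))) *
        (qq2 (k + N) / (qq2 k * qq2 N)) *
        (poch (av ^ 2 * qv ^ ((2 : ℤ) - 2 * ((k + N : ℕ) : ℤ) - 2 * (k : ℤ))) k / qq2 k) =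
      ∑ p ∈ Fintype.piFinset (fun i => antidiagonal (d (Sum.inl i))) ×ˢ
          Fintype.piFinset (fun i => antidiagonal (d (Sum.inr i))),
        rhsTerm Q Sp Ap Sm Am (splitIndex p.1 p.2) := by
  have hadd : qq2 (k + N) = qq2 k * poch (qv ^ 2 * qv ^ (2 * k)) N := poch_add _ _ _
  have e₁ := poch_multi_dual (av ^ 2 * qv ^ ((2 : ℤ) - 2 * ((k + N : ℕ) : ℤ) - 2 * (k : ℤ)))
    (fun i => d (Sum.inl i))
  have e₂ := poch_multi (qv ^ 2 * qv ^ (2 * k)) (fun i => d (Sum.inr i))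
  rw [hk] at e₁
  rw [hN] at e₂
  have hk0 := qq2_ne_zero k
  have hN0 := qq2_ne_zero N
  have h1 : ∏ i, qq2 (d (Sum.inl i)) ≠ 0 := Finset.prod_ne_zero_iff.2 fun i _ => qq2_ne_zero _
  have h2 : ∏ i, qq2 (d (Sum.inr i)) ≠ 0 := Finset.prod_ne_zero_iff.2 fun i _ => qq2_ne_zero _
  have hcancel : ∀ C X Y D₁ D₂ : F, D₁ ≠ 0 → D₂ ≠ 0 →
      C * (qq2 k / D₁) * (qq2 N / D₂) * ((qq2 k * Y) / (qq2 k * qq2 N)) * (X / qq2 k) =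
        C * ((X / D₁) * (Y / D₂)) := by
    intro C X Y D₁ D₂ _ _
    field_simp
  rw [hadd, hcancel _ _ _ _ _ h1 h2, e₁, e₂, Finset.sum_mul_sum, Finset.sum_product]
  refine (Finset.mul_sum _ _ _).trans (Finset.sum_congr rfl fun p₁ hp1 => ?_)
  refine (Finset.mul_sum _ _ _).trans (Finset.sum_congr rfl fun p₂ hp2 => ?_)
  exact term_eq Q Sp Ap Sm Am k N d hk hN _ _ _ _
    (fun i => (mem_antidiagonal.1 (Fintype.mem_piFinset.1 hp1 i)).symm)
    (fun i => (mem_antidiagonal.1 (Fintype.mem_piFinset.1 hp2 i)).symm)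

theorem statement4 (m n : ℕ)
    (Q : Matrix (Fin m ⊕ Fin n) (Fin m ⊕ Fin n) ℤ) (hQ : Q.IsSymm)
    (Sp Ap : Fin m → ℤ) (Sm Am : Fin n → ℤ) (j : ℕ) :
    (∑ d ∈ tuples (Fin m ⊕ Fin n) j,
      (let k : ℕ := ∑ i, d (Sum.inl i);
        (-qv) ^ ((∑ x, Sum.elim Sp Sm x * (d x : ℤ)) + (k : ℤ)) *
          av ^ (∑ x, Sum.elim Ap Am x * (d x : ℤ)) *
          qv ^ ((∑ x, ∑ y, (d x : ℤ) * Q x y * (d y : ℤ)) + 2 * (k : ℤ) ^ 2) *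
          (qq2 k / ∏ i, qq2 (d (Sum.inl i))) *
          (qq2 (j - k) / ∏ i, qq2 (d (Sum.inr i))) *
          (qq2 j / (qq2 k * qq2 (j - k))) *
          (poch (av ^ 2 * qv ^ ((2 : ℤ) - 2 * (j : ℤ) - 2 * (k : ℤ))) k / qq2 k))) =
      ∑ e ∈ tuples (Fin m ⊕ Fin m ⊕ Fin n ⊕ Fin n) j,
        (-qv) ^
            (∑ x, Sum.elim (fun i => Sp i + 2)
              (Sum.elim (fun i => Sp i + 1) (Sum.elim (fun i => Sm i + 1) Sm)) x * (e x : ℤ)) *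
          av ^
            (∑ x, Sum.elim (fun i => Ap i + 2)
              (Sum.elim Ap (Sum.elim Am Am)) x * (e x : ℤ)) *
          qv ^ (∑ x, ∑ y, (e x : ℤ) * QclL Q x y * (e y : ℤ)) /
          ∏ x, qq2 (e x) := by
  change _ = ∑ e ∈ tuples (Fin m ⊕ Fin m ⊕ Fin n ⊕ Fin n) j, rhsTerm Q Sp Ap Sm Am e
  trans ∑ d ∈ tuples (Fin m ⊕ Fin n) j,
      ∑ p ∈ Fintype.piFinset (fun i => antidiagonal (d (Sum.inl i))) ×ˢ
          Fintype.piFinset (fun i => antidiagonal (d (Sum.inr i))),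
        rhsTerm Q Sp Ap Sm Am (splitIndex p.1 p.2)
  · refine Finset.sum_congr rfl fun d hd => ?_
    have hj : ∑ i, d (Sum.inl i) + ∑ i, d (Sum.inr i) = j := by
      rw [← mem_tuples.1 hd, Fintype.sum_sum_type]
    have h := lhsTerm_eq Q Sp Ap Sm Am _ _ d rfl rfl
    rw [hj, show ∑ i, d (Sum.inr i) = j - ∑ i, d (Sum.inl i) by omega] at h
    exact h
  -- A splitting determines `d`, so the pairs `(d, splitting)` are exactly the `e` of total `j`.
  rw [Finset.sum_sigma']
  refine Finset.sum_bij' (fun s _ => splitIndex s.2.1 s.2.2)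
    (fun e _ => ⟨Sum.elim (fun i => e (Sum.inl i) + e (Sum.inr (Sum.inl i)))
        (fun i => e (Sum.inr (Sum.inr (Sum.inl i))) + e (Sum.inr (Sum.inr (Sum.inr i)))),
      (fun i => (e (Sum.inl i), e (Sum.inr (Sum.inl i))),
        fun i => (e (Sum.inr (Sum.inr (Sum.inl i))), e (Sum.inr (Sum.inr (Sum.inr i)))))⟩)
    ?_ ?_ ?_ ?_ ?_
  · rintro ⟨d, p₁, p₂⟩ hs
    simp only [mem_sigma, mem_product, Fintype.mem_piFinset,
      HasAntidiagonal.mem_antidiagonal, mem_tuples] at hs ⊢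
    obtain ⟨hd, h1, h2⟩ := hs
    rw [← hd]
    simp only [Fintype.sum_sum_type, splitIndex, cat4, Sum.elim_inl, Sum.elim_inr, ← h1, ← h2,
      Finset.sum_add_distrib]
    ring
  · intro e he
    rw [mem_tuples] at he
    simp only [mem_sigma, mem_product, Fintype.mem_piFinset,
      HasAntidiagonal.mem_antidiagonal, mem_tuples, Sum.elim_inl, Sum.elim_inr, implies_true, and_true]
    rw [← he]
    simp only [Fintype.sum_sum_type, Sum.elim_inl, Sum.elim_inr, Finset.sum_add_distrib]
    omega
  · rintro ⟨d, p₁, p₂⟩ hs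
    simp only [mem_sigma, mem_product, Fintype.mem_piFinset, HasAntidiagonal.mem_antidiagonal] at hs
    obtain ⟨-, h1, h2⟩ := hs
    have hd : d = Sum.elim (fun i => (p₁ i).1 + (p₁ i).2) (fun i => (p₂ i).1 + (p₂ i).2) := by
      funext x
      rcases x with i | i
      · exact (h1 i).symm
      · exact (h2 i).symm
    subst hd
    rfl
  · intro e _
    funext x
    rcases x with i | i | i | i <;> rfl
  · intro s _
    rfl

end
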